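/- For all n ≥ k ≥ 0, the Eulerian number satisfies A_{2n+1,k} = Σ_{i=0}^{⌊k/2⌋} C(n-k+2i, i) · 2^{k-2i} · a_{2n+1,k-2i}, where a_{m,j} counts permutations of [m] with j even descents and no odd descents. -/

import Mathlib

open Finset

/-- The set of (0-based) descent indices of a permutation of `Fin n`:
`i` is a descent index if `π i > π (i+1)` (so the 1-based descent position is `i+1`). -/
def descentSet {n : ℕ} (π : Equiv.Perm (Fin n)) : Finset ℕ :=
  (Finset.range n).filter
    (fun i => ∃ h : i + 1 < n, π ⟨i + 1, h⟩ < π ⟨i, Nat.lt_of_succ_lt h⟩)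

/-- The number of descents of `π`. -/
def des {n : ℕ} (π : Equiv.Perm (Fin n)) : ℕ := (descentSet π).card

/-- The number of descents of `π` at odd (1-based) positions, i.e. even 0-based indices. -/
def odes {n : ℕ} (π : Equiv.Perm (Fin n)) : ℕ :=
  ((descentSet π).filter (fun i => Even i)).card

/-- The number of descents of `π` at even (1-based) positions, i.e. odd 0-based indices. -/
def edes {n : ℕ} (π : Equiv.Perm (Fin n)) : ℕ :=
  ((descentSet π).filter (fun i => Odd i)).card

/-- The refined Eulerian polynomial `A_n(p,q) = Σ_π p^{odes π} q^{edes π}`. -/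
def refinedEulerian (n : ℕ) (p q : ℝ) : ℝ :=
  ∑ π : Equiv.Perm (Fin n), p ^ odes π * q ^ edes π

/-- The Eulerian polynomial `A_n(q) = Σ_π q^{des π}` as a function. -/
def eulerianEval (n : ℕ) (q : ℝ) : ℝ :=
  ∑ π : Equiv.Perm (Fin n), q ^ des π

/-- The Eulerian polynomial `A_n(q)` as a polynomial. -/
noncomputable def eulerianPolynomial (n : ℕ) : Polynomial ℝ :=
  ∑ π : Equiv.Perm (Fin n), Polynomial.X ^ des π

/-- The Eulerian number `A_{n,k}`: the number of permutations of `[n]` with `k` descents. -/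
def eulerianNumber (n k : ℕ) : ℕ :=
  (Finset.univ.filter (fun π : Equiv.Perm (Fin n) => des π = k)).card

/-- A permutation `a_1 a_2 … a_n` is alternating if `a_1 > a_2 < a_3 > ⋯`. -/
def IsAlternating {n : ℕ} (π : Equiv.Perm (Fin n)) : Prop :=
  ∀ i : ℕ, ∀ h : i + 1 < n,
    (π ⟨i + 1, h⟩ < π ⟨i, Nat.lt_of_succ_lt h⟩ ↔ Even i)

open scoped Classical in
/-- The Euler number `E_n`: the number of alternating permutations of `[n]`. -/
noncomputable def eulerNumber (n : ℕ) : ℕ :=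
  (Finset.univ.filter (fun π : Equiv.Perm (Fin n) => IsAlternating π)).card

/-- `a_{n,k}`: the number of permutations of `[n]` with `k` even descents and no odd descents. -/
def aNum (n k : ℕ) : ℕ :=
  (Finset.univ.filter (fun π : Equiv.Perm (Fin n) => edes π = k ∧ odes π = 0)).card


/-!
Reading a descent as `b` and an ascent as `a`, cut a permutation of `[n + 1]` at its maximum: an
interior maximum leaves the factor `ab` between the two pieces. Cutting at the minimum leaves `ba`
instead. Adding the two recursions, only `a + b` and `ab + ba` occur, as in the `cd`-index of the
Boolean lattice. Give descents at odd positions the weight `p` and those at even positions the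
weight `q`: then `ab + ba` becomes `p + q` and the letters `a + b` pair up to
`(1 + p) (1 + q) = (1 + p q) + (p + q)`. Hence for length `2 n + 1` the weighted count is
homogeneous of degree `n` in `1 + p q` and `p + q`, so that it is determined by its value at
`p = 0`, which counts permutations with no odd descents. Taking `p = q` gives
`A_{2n+1}(q) = ∑ⱼ a_{2n+1,j} (2 q)^j (1 + q²)^(n-j)`, whose coefficients are the assertion.
-/

section Orderings

/-- The arrangements of the elements of `S` in a row. -/
def orderings {α : Type*} (S : Finset α) : Finset (List α) :=
  ⟨S.val.lists, Multiset.lists_nodup_finset S⟩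

variable {α : Type*} {S : Finset α} {l : List α}

lemma mem_orderings : l ∈ orderings S ↔ (l : Multiset α) = S.val := by
  rw [← Finset.mem_val, orderings, Multiset.mem_lists_iff, eq_comm]
  rfl

lemma mem_iff_of_mem_orderings (hl : l ∈ orderings S) {x : α} : x ∈ l ↔ x ∈ S := by
  rw [← Finset.mem_val, ← mem_orderings.1 hl, Multiset.mem_coe]

lemma nodup_of_mem_orderings (hl : l ∈ orderings S) : l.Nodup := by
  rw [← Multiset.coe_nodup, mem_orderings.1 hl]
  exact S.nodup

lemma length_of_mem_orderings (hl : l ∈ orderings S) : l.length = #S := by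
  rw [← Multiset.coe_card, mem_orderings.1 hl, Finset.card_val]

lemma append_cons_mem_orderings_insert [DecidableEq α] {a : α} (ha : a ∉ S) {l₁ l₂ : List α} :
    l₁ ++ a :: l₂ ∈ orderings (insert a S) ↔ ((l₁ ++ l₂ : List α) : Multiset α) = S.val := by
  rw [mem_orderings, Finset.insert_val_of_notMem ha, Multiset.coe_eq_coe.2 List.perm_middle,
    ← Multiset.cons_coe, Multiset.cons_inj_right]

lemma sum_orderings_insert [DecidableEq α] {M : Type*} [AddCommMonoid M] {a : α} (ha : a ∉ S)
    (f : List α → M) :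
    ∑ l ∈ orderings (insert a S), f l =
      ∑ T ∈ S.powerset, ∑ l₁ ∈ orderings T, ∑ l₂ ∈ orderings (S \ T), f (l₁ ++ a :: l₂) := by
  simp only [← Finset.sum_product', Finset.sum_sigma']
  refine (Finset.sum_bij (fun x _ => x.2.1 ++ a :: x.2.2) ?maps ?inj ?surj fun _ _ => rfl).symm
  case maps =>
    rintro ⟨T, l₁, l₂⟩ h
    simp only [mem_sigma, mem_powerset, mem_product, mem_orderings] at h
    rw [append_cons_mem_orderings_insert ha, ← Multiset.coe_add, h.2.1, h.2.2, Finset.sdiff_val]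
    exact add_tsub_cancel_of_le (Finset.val_le_iff.2 h.1)
  case inj =>
    rintro ⟨T, l₁, l₂⟩ h ⟨T', l₁', l₂'⟩ h' heq
    simp only [mem_sigma, mem_powerset, mem_product] at h h'
    have ha₁ : a ∉ l₁' := fun hm => ha (h'.1 ((mem_iff_of_mem_orderings h'.2.1).1 hm))
    have ha₂ : a ∉ l₂' := fun hm => ha (sdiff_subset ((mem_iff_of_mem_orderings h'.2.2).1 hm))
    obtain ⟨rfl, -, rfl⟩ := (List.append_cons_inj_of_notMem ha₁ ha₂).1 heq.symm
    obtain rfl : T' = T := Finset.val_inj.1 <|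
      (mem_orderings.1 h'.2.1).symm.trans (mem_orderings.1 h.2.1)
    rfl
  case surj =>
    intro l hl
    obtain ⟨l₁, l₂, rfl⟩ :=
      List.append_of_mem ((mem_iff_of_mem_orderings hl).2 (mem_insert_self a S))
    rw [append_cons_mem_orderings_insert ha, ← Multiset.coe_add] at hl
    have hle : (l₁ : Multiset α) ≤ S.val := hl ▸ Multiset.le_add_right _ _
    refine ⟨⟨⟨l₁, Multiset.nodup_of_le hle S.nodup⟩, l₁, l₂⟩, ?_, rfl⟩
    simp only [mem_sigma, mem_powerset, mem_product, mem_orderings, Finset.sdiff_val]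
    exact ⟨Finset.val_le_iff.1 hle, trivial, by rw [← hl, add_tsub_cancel_left]⟩

lemma sum_orderings_eq_sum_perm [LinearOrder α] {M : Type*} [AddCommMonoid M] (S : Finset α)
    (f : List α → M) :
    ∑ l ∈ orderings S, f l =
      ∑ π : Equiv.Perm (Fin #S), f (List.ofFn fun i => S.orderEmbOfFin rfl (π i)) := by
  refine (Finset.sum_bij (fun π _ => List.ofFn fun i => S.orderEmbOfFin rfl (π i))
    ?maps ?inj ?surj fun _ _ => rfl).symm
  case maps =>
    intro π _
    have hmap : univ.map (π.toEmbedding.trans (S.orderEmbOfFin rfl).toEmbedding) = S := by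
      rw [← Finset.map_map, Finset.map_univ_equiv, Finset.map_orderEmbOfFin_univ]
    rw [Fin.univ_map_def] at hmap
    exact mem_orderings.2 (congrArg Finset.val hmap)
  case inj =>
    intro π _ σ _ h
    exact Equiv.ext fun i => (S.orderEmbOfFin rfl).injective (congrFun (List.ofFn_injective h) i)
  case surj =>
    intro l hl
    have hlen := length_of_mem_orderings hl
    let rank : Fin #S → Fin #S := fun i => (S.orderIsoOfFin rfl).symm
      ⟨l[i], (mem_iff_of_mem_orderings hl).1 (List.getElem_mem _)⟩
    have hrank : Function.Injective rank := fun i j hij => by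
      have h := congrArg Subtype.val ((S.orderIsoOfFin rfl).symm.injective hij)
      exact Fin.ext ((nodup_of_mem_orderings hl).getElem_inj_iff.1 h)
    refine ⟨Equiv.ofBijective rank (Finite.injective_iff_bijective.1 hrank), mem_univ _, ?_⟩
    refine List.ext_getElem (by simp [hlen]) fun i _ _ => ?_
    simp [rank, ← Finset.coe_orderIsoOfFin_apply]

end Orderings

section DescentPolynomial

variable {R : Type*} [CommSemiring R]

/-- The multivariate descent polynomial `∑_π ∏_{i ∈ Des π} w i` of degree `n`, which records the
whole distribution of descent sets on permutations of `[n]`; positions are 0-based. -/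
def descentPolynomial (w : ℕ → R) (n : ℕ) : R :=
  ∑ π : Equiv.Perm (Fin n), ∏ i ∈ descentSet π, w i

@[simp]
lemma descentPolynomial_zero (w : ℕ → R) : descentPolynomial w 0 = 1 := by
  simp [descentPolynomial, descentSet]

/-- The weight `∏ w i` of a word over the 0-based positions `i` of its descents. -/
def descentWeight {α : Type*} [LinearOrder α] : (ℕ → R) → List α → R
  | _, [] => 1
  | _, [_] => 1
  | w, x :: y :: l => (if y < x then w 0 else 1) * descentWeight (fun i => w (i + 1)) (y :: l)

section DescentWeight

variable {α : Type*} [LinearOrder α]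

lemma descentWeight_cons_of_lt {a : α} {l : List α} (w : ℕ → R) (hl : ∀ x ∈ l, x < a) :
    descentWeight w (a :: l) =
      (if l.length = 0 then 1 else w 0) * descentWeight (fun i => w (i + 1)) l := by
  cases l with
  | nil => simp [descentWeight]
  | cons y l => simp [descentWeight, hl y List.mem_cons_self]

lemma descentWeight_cons_of_gt {a : α} {l : List α} (w : ℕ → R) (hl : ∀ x ∈ l, a < x) :
    descentWeight w (a :: l) = descentWeight (fun i => w (i + 1)) l := by
  cases l with
  | nil => simp [descentWeight]
  | cons y l => simp [descentWeight, (hl y List.mem_cons_self).not_gt]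

lemma descentWeight_append_cons (a : α) (l₁ l₂ : List α) (w : ℕ → R) :
    descentWeight w (l₁ ++ a :: l₂) = descentWeight w (l₁ ++ [a]) *
      descentWeight (fun i => w (i + l₁.length)) (a :: l₂) := by
  induction l₁ generalizing w with
  | nil => simp [descentWeight]
  | cons x l₁ ih =>
    cases l₁ with
    | nil => simp [descentWeight]
    | cons y l₁ =>
      have h := ih fun i => w (i + 1)
      simp only [List.cons_append, List.length_cons] at h ⊢
      simp only [descentWeight, h, mul_assoc, add_assoc]

lemma descentWeight_concat_of_lt {a : α} {l : List α} (w : ℕ → R) (hl : ∀ x ∈ l, x < a) :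
    descentWeight w (l ++ [a]) = descentWeight w l := by
  induction l generalizing w with
  | nil => rfl
  | cons x l ih =>
    cases l <;> simp_all [descentWeight, not_lt_of_gt]

lemma descentWeight_concat_of_gt {a : α} {l : List α} (w : ℕ → R) (hl : ∀ x ∈ l, a < x) :
    descentWeight w (l ++ [a]) =
      (if l.length = 0 then 1 else w (l.length - 1)) * descentWeight w l := by
  induction l generalizing w with
  | nil => simp [descentWeight]
  | cons x l ih =>
    cases l <;> simp_all [descentWeight, mul_left_comm]

lemma descentWeight_eq_prod (w : ℕ → R) (l : List α) :
    descentWeight w l =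
      ∏ i ∈ range l.length with ∃ h : i + 1 < l.length, l[i + 1] < l[i], w i := by
  rw [Finset.prod_filter]
  induction l generalizing w with
  | nil => simp [descentWeight]
  | cons x l ih =>
    cases l with
    | nil => simp [descentWeight]
    | cons y l =>
      rw [descentWeight, ih, mul_comm]
      refine Eq.trans ?_ (Finset.prod_range_succ' _ (y :: l).length).symm
      simp

lemma descentWeight_ofFn {n : ℕ} (w : ℕ → R) (e : Fin n ↪o α) (π : Equiv.Perm (Fin n)) :
    descentWeight w (List.ofFn fun i => e (π i)) = ∏ i ∈ descentSet π, w i := by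
  simp only [descentWeight_eq_prod, descentSet, List.length_ofFn, List.getElem_ofFn, e.lt_iff_lt]

end DescentWeight

lemma sum_orderings_descentWeight {α : Type*} [LinearOrder α] (w : ℕ → R) (S : Finset α) :
    ∑ l ∈ orderings S, descentWeight w l = descentPolynomial w #S := by
  rw [sum_orderings_eq_sum_perm, descentPolynomial]
  exact Finset.sum_congr rfl fun π _ => descentWeight_ofFn w _ π

lemma descentPolynomial_succ_of_split {α : Type*} [LinearOrder α] (w : ℕ → R) (c : ℕ → ℕ → R)
    {S : Finset α} {a : α} (ha : a ∉ S)
    (hc : ∀ l₁ l₂ : List α, (∀ x ∈ l₁, x ∈ S) → (∀ x ∈ l₂, x ∈ S) →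
      descentWeight w (l₁ ++ a :: l₂) = c l₁.length l₂.length *
        (descentWeight w l₁ * descentWeight (fun k => w (k + l₁.length + 1)) l₂)) :
    descentPolynomial w (#S + 1) = ∑ ij ∈ antidiagonal #S, (#S).choose ij.1 * (c ij.1 ij.2 *
      (descentPolynomial w ij.1 * descentPolynomial (fun k => w (k + ij.1 + 1)) ij.2)) := by
  rw [← Finset.card_insert_of_notMem ha, ← sum_orderings_descentWeight, sum_orderings_insert ha,
    Finset.Nat.sum_antidiagonal_eq_sum_range_succ_mk]
  simp only [← nsmul_eq_mul]
  rw [← Finset.sum_powerset_apply_card fun i => c i (#S - i) *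
    (descentPolynomial w i * descentPolynomial (fun k => w (k + i + 1)) (#S - i))]
  refine Finset.sum_congr rfl fun T hT => ?_
  rw [mem_powerset] at hT
  rw [← Finset.card_sdiff_of_subset hT, ← sum_orderings_descentWeight,
    ← sum_orderings_descentWeight, Finset.sum_mul_sum, Finset.mul_sum]
  refine Finset.sum_congr rfl fun l₁ h₁ => ?_
  rw [Finset.mul_sum]
  refine Finset.sum_congr rfl fun l₂ h₂ => ?_
  rw [hc l₁ l₂ (fun x hx => hT ((mem_iff_of_mem_orderings h₁).1 hx))
    (fun x hx => sdiff_subset ((mem_iff_of_mem_orderings h₂).1 hx)),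
    length_of_mem_orderings h₁, length_of_mem_orderings h₂]

lemma descentPolynomial_succ_of_max (w : ℕ → R) (n : ℕ) :
    descentPolynomial w (n + 1) = ∑ ij ∈ antidiagonal n, n.choose ij.1 *
      ((if ij.2 = 0 then 1 else w ij.1) *
        (descentPolynomial w ij.1 * descentPolynomial (fun k => w (k + ij.1 + 1)) ij.2)) := by
  have h := descentPolynomial_succ_of_split (S := range n) w
    (fun i j => if j = 0 then 1 else w i) notMem_range_self fun l₁ l₂ h₁ h₂ => ?_
  · simpa only [card_range] using h
  · rw [descentWeight_append_cons,
      descentWeight_concat_of_lt w fun x hx => mem_range.1 (h₁ x hx),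
      descentWeight_cons_of_lt _ fun x hx => mem_range.1 (h₂ x hx)]
    simp only [zero_add, add_right_comm]
    ring

lemma descentPolynomial_succ_of_min (w : ℕ → R) (n : ℕ) :
    descentPolynomial w (n + 1) = ∑ ij ∈ antidiagonal n, n.choose ij.1 *
      ((if ij.1 = 0 then 1 else w (ij.1 - 1)) *
        (descentPolynomial w ij.1 * descentPolynomial (fun k => w (k + ij.1 + 1)) ij.2)) := by
  have h := descentPolynomial_succ_of_split (S := Ioc 0 n) w
    (fun i _ => if i = 0 then 1 else w (i - 1)) left_notMem_Ioc fun l₁ l₂ h₁ h₂ => ?_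
  · simpa only [Nat.card_Ioc, tsub_zero] using h
  · rw [descentWeight_append_cons,
      descentWeight_concat_of_gt w fun x hx => (mem_Ioc.1 (h₁ x hx)).1,
      descentWeight_cons_of_gt _ fun x hx => (mem_Ioc.1 (h₂ x hx)).1]
    simp only [add_right_comm]
    ring

/-- The weight of the descent next to a maximum placed between words of lengths `i` and `j`, plus
the weight of the descent next to a minimum placed there; inside a word this is the commutative
image of `ab + ba` in the `cd`-index. -/
def extremaWeight (w : ℕ → R) (i j : ℕ) : R :=
  (if j = 0 then 1 else w i) + if i = 0 then 1 else w (i - 1)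

lemma two_mul_descentPolynomial_succ (w : ℕ → R) (n : ℕ) :
    2 * descentPolynomial w (n + 1) = ∑ ij ∈ antidiagonal n, n.choose ij.1 *
      (extremaWeight w ij.1 ij.2 *
        (descentPolynomial w ij.1 * descentPolynomial (fun k => w (k + ij.1 + 1)) ij.2)) := by
  rw [two_mul]
  nth_rw 1 [descentPolynomial_succ_of_max]
  rw [descentPolynomial_succ_of_min, ← Finset.sum_add_distrib]
  simp only [extremaWeight, add_mul, mul_add]

end DescentPolynomial

section Alternating

variable {R : Type*}

/-- The weights `p, q, p, q, …`: since positions are 0-based, `p` marks the odd descents of the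
paper and `q` the even ones. -/
def alternatingWeight (p q : R) (i : ℕ) : R := if Even i then p else q

lemma alternatingWeight_self (q : R) : alternatingWeight q q = fun _ => q :=
  funext fun _ => ite_self q

lemma alternatingWeight_shift (p q : R) (i : ℕ) :
    (fun k => alternatingWeight p q (k + i + 1)) =
      if Even i then alternatingWeight q p else alternatingWeight p q := by
  funext k
  split_ifs with hi <;> simp only [alternatingWeight, Nat.even_add_one, Nat.even_add, hi] <;> grind

lemma extremaWeight_alternatingWeight_succ_succ [CommSemiring R] (p q : R) (i j : ℕ) :
    extremaWeight (alternatingWeight p q) (i + 1) (j + 1) = p + q := by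
  by_cases h : Even i <;> simp [extremaWeight, alternatingWeight, Nat.even_add_one, h, add_comm]

/-- The ratio between the descent polynomials of length `n` for the weights `p, q, p, q, …` and
`0, s, 0, s, …`, where `p + q = (1 + p q) s`. -/
def scaleFactor [CommSemiring R] (p q : R) : ℕ → R
  | 0 => 1
  | n + 1 => (if Even n then 1 else 1 + p) * (1 + p * q) ^ (n / 2)

section ScaleFactor

variable [CommSemiring R] (p q : R)

@[simp]
lemma scaleFactor_zero : scaleFactor p q 0 = 1 := rfl

@[simp]
lemma scaleFactor_odd (k : ℕ) : scaleFactor p q (2 * k + 1) = (1 + p * q) ^ k := by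
  simp [scaleFactor]

@[simp]
lemma scaleFactor_even_succ (k : ℕ) :
    scaleFactor p q (2 * k + 2) = (1 + p) * (1 + p * q) ^ k := by
  simp [scaleFactor, show (2 * k + 1) / 2 = k by omega]

@[simp]
lemma scaleFactor_zero_left (n : ℕ) : scaleFactor 0 q n = 1 := by
  cases n <;> simp [scaleFactor]

end ScaleFactor

variable [CommRing R]

lemma one_add_mul_one_add {p q s : R} (hs : p + q = (1 + p * q) * s) :
    (1 + p) * (1 + q) = (1 + p * q) * (1 + s) := by
  linear_combination hs

variable {p q s : R}

lemma one_add_mul_scaleFactor_swap (hs : p + q = (1 + p * q) * s) (n : ℕ) :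
    (1 + p) * scaleFactor q p (n + 1) = scaleFactor p q (n + 2) * scaleFactor s 0 (n + 1) := by
  obtain ⟨k, rfl | rfl⟩ := n.even_or_odd'
  · simp only [scaleFactor_odd, scaleFactor_even_succ, mul_comm q p, mul_zero, add_zero, one_pow,
      mul_one]
  · rw [show 2 * k + 1 + 2 = 2 * (k + 1) + 1 by ring]
    simp only [scaleFactor_odd, scaleFactor_even_succ, mul_comm q p, mul_zero, add_zero, one_pow,
      mul_one]
    linear_combination (1 + p * q) ^ k * one_add_mul_one_add hs

lemma one_add_alternatingWeight_mul_scaleFactor (hs : p + q = (1 + p * q) * s) (n : ℕ) :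
    (1 + alternatingWeight p q n) * scaleFactor p q (n + 1) =
      scaleFactor p q (n + 2) * (1 + alternatingWeight 0 s n) := by
  obtain ⟨k, rfl | rfl⟩ := n.even_or_odd'
  · simp only [alternatingWeight, even_two_mul, if_true, scaleFactor_odd, scaleFactor_even_succ,
      add_zero, mul_one]
  · rw [show 2 * k + 1 + 2 = 2 * (k + 1) + 1 by ring]
    simp only [alternatingWeight, Nat.not_even_bit1, if_false, scaleFactor_odd,
      scaleFactor_even_succ]
    linear_combination (1 + p * q) ^ k * one_add_mul_one_add hs

lemma add_mul_scaleFactor_mul_scaleFactor (hs : p + q = (1 + p * q) * s) (i j : ℕ) :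
    (p + q) * (scaleFactor p q (i + 1) *
        if Even (i + 1) then scaleFactor q p (j + 1) else scaleFactor p q (j + 1)) =
      scaleFactor p q (i + j + 3) *
        (s * if Even (i + 1) then scaleFactor s 0 (j + 1) else scaleFactor 0 s (j + 1)) := by
  obtain ⟨a, rfl | rfl⟩ := i.even_or_odd' <;> obtain ⟨b, rfl | rfl⟩ := j.even_or_odd'
  · rw [show 2 * a + 2 * b + 3 = 2 * (a + b + 1) + 1 by ring]
    rw [if_neg (Nat.not_even_bit1 a), if_neg (Nat.not_even_bit1 a), scaleFactor_zero_left]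
    simp only [scaleFactor_odd]
    linear_combination (1 + p * q) ^ (a + b) * hs
  · rw [show 2 * a + (2 * b + 1) + 3 = 2 * (a + b + 1) + 2 by ring]
    rw [if_neg (Nat.not_even_bit1 a), if_neg (Nat.not_even_bit1 a), scaleFactor_zero_left]
    simp only [scaleFactor_odd, scaleFactor_even_succ]
    linear_combination (1 + p) * (1 + p * q) ^ (a + b) * hs
  · rw [show 2 * a + 1 + 2 * b + 3 = 2 * (a + b + 1) + 2 by ring, add_assoc (2 * a),
      if_pos (by simp [Nat.even_add]), if_pos (by simp [Nat.even_add])]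
    simp only [scaleFactor_odd, scaleFactor_even_succ, mul_comm q p, mul_zero, add_zero, one_pow,
      mul_one]
    linear_combination (1 + p) * (1 + p * q) ^ (a + b) * hs
  · rw [show 2 * a + 1 + (2 * b + 1) + 3 = 2 * (a + b + 2) + 1 by ring, add_assoc (2 * a),
      if_pos (by simp [Nat.even_add]), if_pos (by simp [Nat.even_add])]
    simp only [scaleFactor_odd, scaleFactor_even_succ, mul_comm q p, mul_zero, add_zero, one_pow,
      mul_one]
    linear_combination (1 + p * q) ^ (a + b) *
      ((p + q) * one_add_mul_one_add hs + (1 + p * q) * (1 + s) * hs)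

lemma extremaWeight_mul_scaleFactor (hs : p + q = (1 + p * q) * s) (i j : ℕ) :
    extremaWeight (alternatingWeight p q) i j *
        (scaleFactor p q i * if Even i then scaleFactor q p j else scaleFactor p q j) =
      scaleFactor p q (i + j + 1) * (extremaWeight (alternatingWeight 0 s) i j *
        if Even i then scaleFactor s 0 j else scaleFactor 0 s j) := by
  rcases i with _ | i <;> rcases j with _ | j
  · simp [extremaWeight, scaleFactor]
  · simpa [extremaWeight, alternatingWeight, add_comm (1 : R)] using
      one_add_mul_scaleFactor_swap hs j
  · simpa [extremaWeight] using one_add_alternatingWeight_mul_scaleFactor hs i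
  · rw [extremaWeight_alternatingWeight_succ_succ,
      extremaWeight_alternatingWeight_succ_succ, zero_add,
      show i + 1 + (j + 1) + 1 = i + j + 3 by ring]
    exact add_mul_scaleFactor_mul_scaleFactor hs i j

lemma descentPolynomial_alternatingWeight [NoZeroDivisors R] [NeZero (2 : R)] {p q s : R}
    (hs : p + q = (1 + p * q) * s) (n : ℕ) :
    descentPolynomial (alternatingWeight p q) n =
      scaleFactor p q n * descentPolynomial (alternatingWeight 0 s) n := by
  induction n using Nat.strong_induction_on generalizing p q with
  | _ n ih =>
    cases n with
    | zero => simp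
    | succ n =>
      refine mul_left_cancel₀ (two_ne_zero (α := R)) ?_
      rw [mul_left_comm, two_mul_descentPolynomial_succ, two_mul_descentPolynomial_succ,
        Finset.mul_sum]
      refine Finset.sum_congr rfl fun ⟨i, j⟩ hij => ?_
      rw [HasAntidiagonal.mem_antidiagonal] at hij
      subst hij
      have hsplit := extremaWeight_mul_scaleFactor hs i j
      have hs' : q + p = (1 + q * p) * s := by rw [add_comm, hs, mul_comm p]
      simp only [alternatingWeight_shift]
      rw [ih i (by omega) hs]
      split_ifs at hsplit ⊢ with hi
      · rw [ih j (by omega) hs', ih j (by omega) (show s + 0 = (1 + s * 0) * s by ring)]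
        linear_combination (((i + j).choose i : R) *
          descentPolynomial (alternatingWeight 0 s) i *
          descentPolynomial (alternatingWeight 0 s) j) * hsplit
      · rw [ih j (by omega) hs]
        rw [scaleFactor_zero_left] at hsplit
        linear_combination (((i + j).choose i : R) *
          descentPolynomial (alternatingWeight 0 s) i *
          descentPolynomial (alternatingWeight 0 s) j) * hsplit

end Alternating

lemma refinedEulerian_eq_descentPolynomial (n : ℕ) (p q : ℝ) :
    refinedEulerian n p q = descentPolynomial (alternatingWeight p q) n := by
  refine Finset.sum_congr rfl fun π _ => ?_
  simp only [alternatingWeight, Finset.prod_ite, Finset.prod_const, odes, edes,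
    Nat.not_even_iff_odd]

theorem refinedEulerian_odd {p q : ℝ} (h : 1 + p * q ≠ 0) (n : ℕ) :
    refinedEulerian (2 * n + 1) p q =
      (1 + p * q) ^ n * refinedEulerian (2 * n + 1) 0 ((p + q) / (1 + p * q)) := by
  rw [refinedEulerian_eq_descentPolynomial, refinedEulerian_eq_descentPolynomial,
    descentPolynomial_alternatingWeight (mul_div_cancel₀ _ h).symm, scaleFactor_odd]

lemma refinedEulerian_self (n : ℕ) (q : ℝ) :
    refinedEulerian n q q = (eulerianPolynomial n).eval q := by
  simp [refinedEulerian_eq_descentPolynomial, alternatingWeight_self, descentPolynomial,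
    eulerianPolynomial, Polynomial.eval_finsetSum, des]

lemma edes_le {n : ℕ} (π : Equiv.Perm (Fin n)) : edes π ≤ (n - 1) / 2 := by
  rw [edes, ← Finset.card_range ((n - 1) / 2)]
  refine Finset.card_le_card_of_injOn (· / 2) (fun i hi => ?_) fun i hi j hj hij => ?_
  · simp only [descentSet, Finset.coe_filter, Finset.mem_filter, Set.mem_ofPred_eq] at hi
    obtain ⟨⟨-, h, -⟩, k, rfl⟩ := hi
    simp only [Finset.coe_range, Set.mem_Iio]
    omega
  · obtain ⟨k, rfl⟩ := (Finset.mem_filter.1 hi).2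
    obtain ⟨l, rfl⟩ := (Finset.mem_filter.1 hj).2
    simp only at hij
    omega

lemma refinedEulerian_zero_left (n : ℕ) (s : ℝ) :
    refinedEulerian n 0 s = ∑ j ∈ range ((n - 1) / 2 + 1), aNum n j * s ^ j := by
  rw [refinedEulerian, ← Finset.sum_fiberwise_of_maps_to (g := edes)
    fun π _ => Finset.mem_range_succ_iff.2 (edes_le π)]
  refine Finset.sum_congr rfl fun j _ => ?_
  rw [aNum, ← nsmul_eq_mul, ← Finset.sum_const, ← Finset.filter_filter,
    Finset.sum_filter (odes · = 0)]
  refine Finset.sum_congr rfl fun π hπ => ?_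
  rw [(Finset.mem_filter.1 hπ).2, zero_pow_eq, ite_mul, one_mul, zero_mul]

section Coefficients

open Polynomial

lemma eulerianPolynomial_odd (n : ℕ) :
    eulerianPolynomial (2 * n + 1) = ∑ j ∈ range (n + 1),
      C (2 ^ j * aNum (2 * n + 1) j : ℝ) * (X ^ j * expand ℝ 2 ((1 + X) ^ (n - j))) := by
  refine Polynomial.funext fun q => ?_
  have hpos : 0 < 1 + q * q := add_pos_of_pos_of_nonneg one_pos (mul_self_nonneg q)
  rw [← refinedEulerian_self, refinedEulerian_odd hpos.ne', refinedEulerian_zero_left,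
    show (2 * n + 1 - 1) / 2 = n by omega, Finset.mul_sum, eval_finsetSum]
  refine Finset.sum_congr rfl fun j hj => ?_
  obtain ⟨d, rfl⟩ := Nat.exists_eq_add_of_le (Finset.mem_range_succ_iff.1 hj)
  simp only [eval_mul, eval_pow, eval_X, eval_C, expand_eval, eval_add, eval_one,
    Nat.add_sub_cancel_left]
  rw [div_pow, pow_add, ← two_mul, mul_pow]
  field_simp

lemma coeff_eulerianPolynomial (m k : ℕ) :
    (eulerianPolynomial m).coeff k = eulerianNumber m k := by
  simp only [eulerianPolynomial, finsetSum_coeff, coeff_X_pow, Finset.sum_boole, eulerianNumber,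
    eq_comm]

lemma coeff_X_pow_mul_expand_one_add_X_pow {S : Type*} [CommSemiring S] (j m k : ℕ) :
    (X ^ j * expand S 2 ((1 + X) ^ m)).coeff k =
      if j ≤ k ∧ 2 ∣ k - j then (m.choose ((k - j) / 2) : S) else 0 := by
  rw [coeff_X_pow_mul', coeff_expand two_pos, coeff_one_add_X_pow, ite_and]

end Coefficients

lemma sum_range_even_sub {M : Type*} [AddCommMonoid M] {n k : ℕ} (h : k ≤ n) (f : ℕ → M) :
    ∑ j ∈ range (n + 1) with j ≤ k ∧ 2 ∣ k - j, f j = ∑ i ∈ range (k / 2 + 1), f (k - 2 * i) := by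
  refine Finset.sum_bij' (fun j _ => (k - j) / 2) (fun i _ => k - 2 * i) ?_ ?_ ?_ ?_ ?_ <;>
    simp only [mem_filter, mem_range]
  · omega
  · omega
  · omega
  · omega
  · rintro j ⟨-, hj, hd⟩
    congr 1
    omega

/-- A_{2n+1,k} = Σ_{i=0}^{⌊k/2⌋} C(n-k+2i, i) 2^{k-2i} a_{2n+1,k-2i}. -/
theorem eulerianNumber_odd_expansion (n k : ℕ) (h : k ≤ n) :
    eulerianNumber (2 * n + 1) k =
      ∑ i ∈ Finset.range (k / 2 + 1),
        (n - k + 2 * i).choose i * 2 ^ (k - 2 * i) * aNum (2 * n + 1) (k - 2 * i) := by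
  rw [← Nat.cast_inj (R := ℝ), ← coeff_eulerianPolynomial, eulerianPolynomial_odd,
    Polynomial.finsetSum_coeff]
  simp only [Polynomial.coeff_C_mul, coeff_X_pow_mul_expand_one_add_X_pow, mul_ite, mul_zero]
  rw [← Finset.sum_filter, sum_range_even_sub h, Nat.cast_sum]
  refine Finset.sum_congr rfl fun i hi => ?_
  have hik : 2 * i ≤ k := by rw [mem_range] at hi; omega
  rw [Nat.sub_sub_self hik, Nat.mul_div_cancel_left i two_pos,
    show n - (k - 2 * i) = n - k + 2 * i by omega]
  push_cast
  ring
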